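/- arXiv:1712.05850 — 2 statements merged into one kernel-verified Lean document; each statement's English description precedes it below -/
import Mathlib

section
/- The matrix A satisfies A³ = 4^K · A; consequently every eigenvalue of A lies in the set {0, 2^K, −2^K}. -/
/-- The value ±1 associated to a Boolean sign. -/
noncomputable def sgn (b : Bool) : ℝ := if b then 1 else -1

/-- The `2^K × 2^K` matrix with rows and columns indexed by sign vectors
`u, v ∈ {−1,1}^K` (encoded as `Fin K → Bool`), with entries
`A_{u,v} = Σ_{m=1}^K (−1)^m u_m v_m`. -/
noncomputable def volcanoA (K : ℕ) : Matrix (Fin K → Bool) (Fin K → Bool) ℝ :=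
  Matrix.of fun u v => ∑ m : Fin K, (-1 : ℝ) ^ ((m : ℕ) + 1) * sgn (u m) * sgn (v m)


lemma sgn_mul_self' (b : Bool) : sgn b * sgn b = 1 := by cases b <;> simp [sgn]

lemma sgn_not' (b : Bool) : sgn (!b) = - sgn b := by cases b <;> simp [sgn]

lemma sgn_orth (K : ℕ) (m n : Fin K) :
    ∑ u : Fin K → Bool, sgn (u m) * sgn (u n) = if m = n then (2 : ℝ) ^ K else 0 := by
  split_ifs with h
  · subst h
    simp [sgn_mul_self']
  · have hinv : Function.Involutive
        (fun u : Fin K → Bool => Function.update u m (!(u m))) := by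
      intro u
      simp
    have := Equiv.sum_comp hinv.toPerm (fun u : Fin K → Bool => sgn (u m) * sgn (u n))
    simp only [Function.Involutive.coe_toPerm, Function.update_self,
      Function.update_of_ne (Ne.symm h), sgn_not', neg_mul, Finset.sum_neg_distrib] at this
    linarith

lemma volcanoA_cube (K : ℕ) : volcanoA K ^ 3 = (4 : ℝ) ^ K • volcanoA K := by
  let U : Matrix (Fin K → Bool) (Fin K) ℝ := Matrix.of fun u m => sgn (u m)
  let D : Matrix (Fin K) (Fin K) ℝ := Matrix.diagonal fun m => (-1 : ℝ) ^ ((m : ℕ) + 1)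
  have hA : volcanoA K = U * D * U.transpose := by
    ext u v
    simp only [volcanoA, U, D, Matrix.of_apply, Matrix.mul_apply (M := _ * _),
      Matrix.mul_diagonal, Matrix.transpose_apply]
    exact Finset.sum_congr rfl fun m _ => by ring
  have hU : U.transpose * U = (2 : ℝ) ^ K • (1 : Matrix (Fin K) (Fin K) ℝ) := by
    ext m n
    simp only [U, Matrix.mul_apply, Matrix.transpose_apply, Matrix.of_apply, sgn_orth,
      Matrix.smul_apply, Matrix.one_apply, smul_eq_mul, mul_ite, mul_one, mul_zero]
  have hD : D * D = 1 := by
    simp only [D, Matrix.diagonal_mul_diagonal, ← Matrix.diagonal_one]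
    congr 1
    ext m
    rw [← mul_pow]; simp
  calc volcanoA K ^ 3
      = U * D * (U.transpose * U) * D * (U.transpose * U) * D * U.transpose := by
        rw [hA, pow_three]; simp only [Matrix.mul_assoc]
    _ = ((2 : ℝ) ^ K * 2 ^ K) • (U * (D * D) * D * U.transpose) := by
        rw [hU]
        simp only [Matrix.mul_smul, Matrix.smul_mul, Matrix.mul_one, smul_smul,
          Matrix.mul_assoc]
    _ = (4 : ℝ) ^ K • volcanoA K := by
        rw [hD, hA, Matrix.mul_one, ← mul_pow]; norm_num

/-- `A³ = 4^K · A`; consequently every (real) eigenvalue of `A` lies in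
`{0, 2^K, −2^K}`. -/
theorem stmt3 (K : ℕ) (hK : 0 < K) (hKeven : Even K) :
    volcanoA K ^ 3 = (4 : ℝ) ^ K • volcanoA K ∧
      ∀ μ ∈ spectrum ℝ (volcanoA K), μ = 0 ∨ μ = 2 ^ K ∨ μ = -(2 ^ K) := by
  refine ⟨volcanoA_cube K, fun μ hμ => ?_⟩
  have h := spectrum.subset_polynomial_aeval (volcanoA K)
    (Polynomial.X ^ 3 - Polynomial.C ((4 : ℝ) ^ K) * Polynomial.X) ⟨μ, hμ, rfl⟩
  have h0 : Polynomial.aeval (volcanoA K)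
      (Polynomial.X ^ 3 - Polynomial.C ((4 : ℝ) ^ K) * Polynomial.X) = 0 := by
    rw [map_sub, map_mul, map_pow, Polynomial.aeval_X, Polynomial.aeval_C, volcanoA_cube,
      Algebra.smul_def, sub_self]
  rw [h0, spectrum.zero_eq, Set.mem_singleton_iff] at h
  simp only [Polynomial.eval_sub, Polynomial.eval_mul, Polynomial.eval_pow, Polynomial.eval_X,
    Polynomial.eval_C] at h
  have h4 : (4 : ℝ) ^ K = 2 ^ K * 2 ^ K := by rw [← mul_pow]; norm_num
  rw [h4] at h
  have h' : μ * ((μ - 2 ^ K) * (μ + 2 ^ K)) = 0 := by linear_combination h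
  rcases mul_eq_zero.1 h' with h | h
  · exact Or.inl h
  · rcases mul_eq_zero.1 h with h | h
    · exact Or.inr (Or.inl (sub_eq_zero.1 h))
    · exact Or.inr (Or.inr (eq_neg_of_add_eq_zero_left h))
end

section
/- The rank of the matrix A equals K. -/
/-- The `2^K × K` matrix whose rows are the sign vectors. -/
noncomputable def signS (K : ℕ) : Matrix (Fin K → Bool) (Fin K) ℝ :=
  Matrix.of fun u m => sgn (u m)

/-- A left inverse of `signS`. -/
noncomputable def signL (K : ℕ) : Matrix (Fin K) (Fin K → Bool) ℝ :=
  Matrix.of fun i u => (1 / 2 : ℝ) * ((if u = (fun _ => true) then 1 else 0)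
    - (if u = Function.update (fun _ => true) i false then 1 else 0))

/-- The diagonal matrix of alternating signs. -/
noncomputable def signD (K : ℕ) : Matrix (Fin K) (Fin K) ℝ :=
  Matrix.diagonal fun m => (-1 : ℝ) ^ ((m : ℕ) + 1)

theorem signL_mul_signS (K : ℕ) : signL K * signS K = 1 := by
  ext i m
  rw [Matrix.mul_apply]
  simp only [signL, signS, Matrix.of_apply, mul_assoc, sub_mul, ite_mul, one_mul, zero_mul,
    ← Finset.mul_sum, Finset.sum_sub_distrib, Finset.sum_ite_eq', Finset.sum_ite_eq,
    Finset.mem_univ, if_true]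
  by_cases h : i = m
  · subst h
    simp [sgn]
    norm_num
  · have h' : m ≠ i := fun e => h e.symm
    simp [sgn, Function.update_of_ne h', Matrix.one_apply_ne h]

theorem volcanoA_eq (K : ℕ) :
    volcanoA K = signS K * (signD K * (signS K).transpose) := by
  ext u v
  rw [Matrix.mul_apply]
  simp only [volcanoA, signD, signS, Matrix.of_apply, Matrix.diagonal_mul,
    Matrix.transpose_apply]
  exact Finset.sum_congr rfl fun m _ => by ring

/-- The rank of `A` equals `K`. -/
theorem stmt5 (K : ℕ) (hK : 0 < K) (hKeven : Even K) :
    (volcanoA K).rank = K := by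
  apply le_antisymm
  · rw [volcanoA_eq]
    refine (Matrix.rank_mul_le_left _ _).trans ?_
    simpa using Matrix.rank_le_card_width (signS K)
  · have h1 : signL K * volcanoA K * (signL K).transpose = signD K := by
      have h2 : (signS K).transpose * (signL K).transpose = 1 := by
        rw [← Matrix.transpose_mul, signL_mul_signS, Matrix.transpose_one]
      rw [volcanoA_eq, ← Matrix.mul_assoc, signL_mul_signS, Matrix.one_mul, Matrix.mul_assoc, h2,
        Matrix.mul_one]
    have h3 : (signD K).rank = K := by
      have : IsUnit (signD K) := by
        rw [Matrix.isUnit_iff_isUnit_det, signD, Matrix.det_diagonal, isUnit_iff_ne_zero]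
        exact Finset.prod_ne_zero_iff.mpr fun m _ => pow_ne_zero _ (by norm_num)
      simpa using Matrix.rank_of_isUnit _ this
    calc K = (signD K).rank := h3.symm
      _ = (signL K * volcanoA K * (signL K).transpose).rank := by rw [h1]
      _ ≤ (signL K * volcanoA K).rank := Matrix.rank_mul_le_left _ _
      _ ≤ (volcanoA K).rank := Matrix.rank_mul_le_right _ _
end
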